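/- Define D₁(n,y), N₁(n,y) and a(n), b(n), c(n) as in the context, set n = 2m, and let y_m = (b(2m) + √(b(2m)² − 4·a(2m)·c(2m)))/(2·a(2m)). Further define D(m,y) and N(m,y) as in the context. Then there exists m₀ such that for all m ≥ m₀: a(2m) ≠ 0, b(2m)² − 4·a(2m)·c(2m) ≥ 0, N(m, y_m) > 0, and D(m, y_m) > 0. Moreover, y_m ~ −3^{2m+1}/(2^{2m+1}·2m) as m → ∞ (i.e., the ratio of the two sides tends to 1). -/

import Mathlib

/-!
Write `p = 2^n`, `q = 3^n`. Reading off coefficients, `a ~ 8 n p²`, `b ~ -16 n p³`, and in `c` the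
`p⁴` terms cancel, leaving `c ~ 24 p² q`. Hence `a > 0 > b` eventually, and since
`4ac / b² = O(q / (n p²)) → 0` the discriminant is eventually positive. Rationalizing,
`(b + √(b² - 4ac)) / (2a) = -2c / (√(b² - 4ac) - b) ~ -48 p² q / (32 n p³) = -(3/2) q / (n p)`,
which at `n = 2m` is the claimed asymptotics (`tendsto_root`).

In particular `y_m = o(4^m / m)`. Under this bound the pure powers `8·2^{6m}` and `4·2^{4m}` dominate
every other term of `N(m, y_m)` and `D(m, y_m)`, so both are eventually positive (`tendsto_Nv`,
`tendsto_Dv`).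

Every limit is obtained by dividing by the dominant monomial, writing the quotient as a polynomial
in a few sequences that tend to `0`, and evaluating that polynomial at the origin by continuity.
-/

/-- `D₁(n,y)`, from linearizing the diagonal restriction of the spectrahedral relaxation of
the multivariate Eulerian polynomial `A_n` with the vector `v = (y, 1, −1, …, −1)`. -/
noncomputable def D1 (n : ℕ) (y : ℝ) : ℝ :=
  10 - (2:ℝ)^(n+2) + (2:ℝ)^(2*n+2) - 2*(3:ℝ)^(n+1) + (n:ℝ)
  + 4*y - (2:ℝ)^(n+1)*y + (n:ℝ)*y + y*(4 - (2:ℝ)^(n+1) + (n:ℝ) + (n:ℝ)*y)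

/-- `N₁(n,y)`, from linearizing the diagonal restriction of the spectrahedral relaxation of
the multivariate Eulerian polynomial `A_n` with the vector `v = (y, 1, −1, …, −1)`. -/
noncomputable def N1 (n : ℕ) (y : ℝ) : ℝ :=
  -10 + (2:ℝ)^(n+3) - (1/3)*(2:ℝ)^(2*n+3) - (1/3)*(2:ℝ)^(2*n+4)
  + (1/7)*(2:ℝ)^(3*n+4) + (1/7)*(2:ℝ)^(3*n+5)
  + 2*(3:ℝ)^n - 4*(3:ℝ)^(n+1) + 2*(3:ℝ)^(n+2)
  - (1/5)*(2:ℝ)^(n+1)*(3:ℝ)^(n+3)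
  - (4:ℝ)^(n+1) + (4:ℝ)^(n+2) - (1/5)*(6:ℝ)^(n+2) + (1/7)*(8:ℝ)^(n+1)
  - (n:ℝ)
  - 8*y - (2:ℝ)^(n+2)*y + (2:ℝ)^(n+3)*y - (1/3)*(2:ℝ)^(2*n+3)*y - (1/3)*(2:ℝ)^(2*n+4)*y
  + 4*(3:ℝ)^(n+1)*y - 2*(n:ℝ)*y - 2*y^2 + (2:ℝ)^(n+1)*y^2

/-- `D(m,y)`, from linearizing the diagonal restriction of the spectrahedral relaxation of
the multivariate Eulerian polynomial `A_{2m}` with the vector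
`v = (y, (−2^{m−i})_{i=3}^{m}, 0, 1/2, (1)_{i=1}^{m})`. -/
noncomputable def Dv (m : ℕ) (y : ℝ) : ℝ :=
  -1/12 + (2:ℝ)^(3*(m:ℤ)) + (2:ℝ)^((m:ℤ)+2) + 5*(2:ℝ)^(2*(m:ℤ)-3) - 7*(2:ℝ)^(2*(m:ℤ)-1)
  + 3*(2:ℝ)^(3*(m:ℤ)+1) - (2:ℝ)^(3*(m:ℤ)+3) + (1/3)*(2:ℝ)^(4*(m:ℤ)+2)
  + (1/3)*(2:ℝ)^(4*(m:ℤ)+3)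
  - 2*(3:ℝ)^((m:ℤ)-1) - (2:ℝ)^((m:ℤ)+4)*(3:ℝ)^((m:ℤ)-1) + (3:ℝ)^(m:ℤ)
  - (2:ℝ)^((m:ℤ)+1)*(3:ℝ)^(m:ℤ) - (3:ℝ)^((m:ℤ)+1) + (2:ℝ)^((m:ℤ)+2)*(3:ℝ)^((m:ℤ)+1)
  - 2*(3:ℝ)^(2*(m:ℤ)+1) - (11/3)*(4:ℝ)^((m:ℤ)-2)
  + (m:ℝ) - (2:ℝ)^(3*(m:ℤ))*(m:ℝ) - 5*(2:ℝ)^(2*(m:ℤ)-4)*(m:ℝ)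
  - (2:ℝ)^(2*(m:ℤ)-3)*(m:ℝ) + (2:ℝ)^(2*(m:ℤ)-1)*(m:ℝ) + (4:ℝ)^((m:ℤ)-2)*(m:ℝ)
  + (2:ℝ)^(2*(m:ℤ)-4)*(m:ℝ)^2
  + (-3 + (2:ℝ)^((m:ℤ)-1) + (2:ℝ)^((m:ℤ)+1) - (2:ℝ)^((m:ℤ)+2) + (2:ℝ)^(2*(m:ℤ)+2)
      - 2*(m:ℝ) - (2:ℝ)^((m:ℤ)-1)*(m:ℝ)) * y
  + 2*(m:ℝ)*y^2

/-- `N(m,y)`, from linearizing the diagonal restriction of the spectrahedral relaxation of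
the multivariate Eulerian polynomial `A_{2m}` with the vector
`v = (y, (−2^{m−i})_{i=3}^{m}, 0, 1/2, (1)_{i=1}^{m})`. -/
noncomputable def Nv (m : ℕ) (y : ℝ) : ℝ :=
  1/12 + (2:ℝ)^(2*(m:ℤ)) - (2:ℝ)^(3*(m:ℤ)) + 5*(2:ℝ)^(4*(m:ℤ)) - (2:ℝ)^((m:ℤ)+2)
  + (11/3)*(2:ℝ)^(2*(m:ℤ)-4) - 5*(2:ℝ)^(2*(m:ℤ)-3) - 7*(2:ℝ)^(2*(m:ℤ)-1)
  + 3*(2:ℝ)^(2*(m:ℤ)+1) + 9*(2:ℝ)^(3*(m:ℤ)-3) - 47*(2:ℝ)^(3*(m:ℤ)-2)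
  + 3*(2:ℝ)^(3*(m:ℤ)-1) - (2:ℝ)^(3*(m:ℤ)+2) - (1/7)*(2:ℝ)^(3*(m:ℤ)+3)
  + (1/7)*(2:ℝ)^(3*(m:ℤ)+4) + (5/7)*(2:ℝ)^(3*(m:ℤ)+5) - (27/5)*(2:ℝ)^(4*(m:ℤ)-3)
  + 5*(2:ℝ)^(4*(m:ℤ)-1) - (2:ℝ)^(4*(m:ℤ)+1) + (2:ℝ)^(5*(m:ℤ)+1) + 3*(2:ℝ)^(5*(m:ℤ)+2)
  - (2:ℝ)^(5*(m:ℤ)+4) + (1/7)*(2:ℝ)^(6*(m:ℤ)+3) + (1/3)*(2:ℝ)^(6*(m:ℤ)+4)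
  + (1/21)*(2:ℝ)^(6*(m:ℤ)+5)
  + 2*(3:ℝ)^((m:ℤ)-1) - 11*(2:ℝ)^(2*(m:ℤ))*(3:ℝ)^((m:ℤ)-1)
  - (1/5)*(2:ℝ)^((m:ℤ)+3)*(3:ℝ)^((m:ℤ)-1) + (2:ℝ)^((m:ℤ)+4)*(3:ℝ)^((m:ℤ)-1)
  + 13*(2:ℝ)^(2*(m:ℤ)+2)*(3:ℝ)^((m:ℤ)-1) - (2:ℝ)^(3*(m:ℤ)+5)*(3:ℝ)^((m:ℤ)-1)
  - (3:ℝ)^(m:ℤ) - (2:ℝ)^((m:ℤ)-1)*(3:ℝ)^(m:ℤ) + (2:ℝ)^((m:ℤ)+1)*(3:ℝ)^(m:ℤ)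
  + 7*(2:ℝ)^(2*(m:ℤ)-1)*(3:ℝ)^(m:ℤ) - (2:ℝ)^(3*(m:ℤ)+2)*(3:ℝ)^(m:ℤ)
  + (3:ℝ)^((m:ℤ)+1) - (2:ℝ)^((m:ℤ)+2)*(3:ℝ)^((m:ℤ)+1) - (2:ℝ)^(2*(m:ℤ)+3)*(3:ℝ)^((m:ℤ)+1)
  + (2:ℝ)^(3*(m:ℤ)+3)*(3:ℝ)^((m:ℤ)+1) - (2:ℝ)^(2*(m:ℤ)+1)*(3:ℝ)^((m:ℤ)+2)
  + (2:ℝ)^(2*(m:ℤ)-2)*(3:ℝ)^((m:ℤ)+3)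
  + 4*(3:ℝ)^(2*(m:ℤ)+1) - (2:ℝ)^(m:ℤ)*(3:ℝ)^(2*(m:ℤ)+1)
  - (2:ℝ)^((m:ℤ)+1)*(3:ℝ)^(2*(m:ℤ)+1) + (2:ℝ)^((m:ℤ)+2)*(3:ℝ)^(2*(m:ℤ)+1)
  - (1/5)*(2:ℝ)^(2*(m:ℤ)+2)*(3:ℝ)^(2*(m:ℤ)+1)
  + (6:ℝ)^(m:ℤ) - (6:ℝ)^((m:ℤ)+1) - (13/5)*(6:ℝ)^(2*(m:ℤ)+1)
  - (m:ℝ) - (2:ℝ)^(2*(m:ℤ))*(m:ℝ) + (2:ℝ)^(3*(m:ℤ))*(m:ℝ)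
  + 5*(2:ℝ)^(2*(m:ℤ)-3)*(m:ℝ) + (2:ℝ)^(2*(m:ℤ)-2)*(m:ℝ) - 5*(2:ℝ)^(4*(m:ℤ)-2)*(m:ℝ)
  - (2:ℝ)^(4*(m:ℤ)-1)*(m:ℝ) + (2:ℝ)^(4*(m:ℤ)+1)*(m:ℝ) - (2:ℝ)^(5*(m:ℤ)+1)*(m:ℝ)
  + (2:ℝ)^(2*(m:ℤ)+1)*(3:ℝ)^((m:ℤ)-1)*(m:ℝ) + (2:ℝ)^(2*(m:ℤ)-2)*(3:ℝ)^(m:ℤ)*(m:ℝ)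
  - (2:ℝ)^(2*(m:ℤ)-1)*(3:ℝ)^((m:ℤ)+1)*(m:ℝ) + (2:ℝ)^((m:ℤ)-1)*(3:ℝ)^(2*(m:ℤ)+1)*(m:ℝ)
  - (2:ℝ)^(2*(m:ℤ)-4)*(m:ℝ)^2 + (2:ℝ)^(4*(m:ℤ)-3)*(m:ℝ)^2
  + (3 - 3*(2:ℝ)^((m:ℤ)-1) + (2:ℝ)^(m:ℤ) + 5*(2:ℝ)^(3*(m:ℤ)) + (2:ℝ)^((m:ℤ)+1)
      - (2:ℝ)^(2*(m:ℤ)+2) + (2:ℝ)^(3*(m:ℤ)+1) - (2:ℝ)^(3*(m:ℤ)+3) + (2:ℝ)^(4*(m:ℤ)+3)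
      - (2:ℝ)^((m:ℤ)+4)*(3:ℝ)^((m:ℤ)-1) - (2:ℝ)^((m:ℤ)+1)*(3:ℝ)^(m:ℤ)
      + (2:ℝ)^((m:ℤ)+2)*(3:ℝ)^((m:ℤ)+1) - 4*(3:ℝ)^(2*(m:ℤ)+1)
      + 2*(m:ℝ) + (2:ℝ)^((m:ℤ)-1)*(m:ℝ) - (2:ℝ)^(3*(m:ℤ))*(m:ℝ)) * y
  + (-2 + (2:ℝ)^(2*(m:ℤ)+1) - 2*(m:ℝ)) * y^2

open Filter Topology

/-! ### Closed forms of the coefficients -/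

lemma D1_eq (n : ℕ) (y : ℝ) :
    D1 n y = (10 - 4 * 2 ^ n + 4 * (2 ^ n) ^ 2 - 6 * 3 ^ n + n)
      + (8 - 4 * 2 ^ n + 2 * n) * y + n * y ^ 2 := by
  unfold D1
  ring

lemma N1_eq (n : ℕ) (y : ℝ) :
    N1 n y = (-10 + 8 * 2 ^ n + 4 * (2 ^ n) ^ 2 + 8 * (2 ^ n) ^ 3 + 8 * 3 ^ n
        - 18 * 2 ^ n * 3 ^ n - n)
      + (-8 + 4 * 2 ^ n - 8 * (2 ^ n) ^ 2 + 12 * 3 ^ n - 2 * n) * y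
      + (2 * 2 ^ n - 2) * y ^ 2 := by
  have h4 : (4 : ℝ) ^ n = (2 ^ n) ^ 2 := by rw [← pow_mul, mul_comm, pow_mul]; norm_num
  have h6 : (6 : ℝ) ^ n = 2 ^ n * 3 ^ n := by rw [← mul_pow]; norm_num
  have h8 : (8 : ℝ) ^ n = (2 ^ n) ^ 3 := by rw [← pow_mul, mul_comm, pow_mul]; norm_num
  unfold N1
  simp only [pow_succ (4 : ℝ), pow_succ (6 : ℝ), pow_succ (8 : ℝ), h4, h6, h8]
  ring

lemma deriv_quadratic (u v w y : ℝ) :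
    deriv (fun y : ℝ => u + v * y + w * y ^ 2) y = v + 2 * w * y := by
  have h : HasDerivAt (fun y : ℝ => u + v * y + w * y ^ 2)
      (v * 1 + w * ((2 : ℕ) * y ^ (2 - 1) * 1)) y :=
    (((hasDerivAt_id y).const_mul v).const_add u).add (((hasDerivAt_id y).pow 2).const_mul w)
  rw [h.deriv]
  push_cast
  ring

/-- The coefficients are determined by the polynomial identity. In `c` the terms in `2^{4n}`
cancel, so that the leading term is `24·2^{2n}·3^n`. -/
lemma coeffs {a b c : ℕ → ℝ}
    (habc : ∀ (n : ℕ) (y : ℝ),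
      deriv (N1 n) y * D1 n y - N1 n y * deriv (D1 n) y = a n * y ^ 2 + b n * y + c n) (n : ℕ) :
    a n = (2 * 2 ^ n - 2) * (8 - 4 * 2 ^ n + 2 * n)
        - n * (-8 + 4 * 2 ^ n - 8 * (2 ^ n) ^ 2 + 12 * 3 ^ n - 2 * n) ∧
    b n = 2 * ((2 * 2 ^ n - 2) * (10 - 4 * 2 ^ n + 4 * (2 ^ n) ^ 2 - 6 * 3 ^ n + n)
        - n * (-10 + 8 * 2 ^ n + 4 * (2 ^ n) ^ 2 + 8 * (2 ^ n) ^ 3 + 8 * 3 ^ n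
          - 18 * 2 ^ n * 3 ^ n - n)) ∧
    c n = 24 * (2 ^ n) ^ 2 * 3 ^ n - 72 * (3 ^ n) ^ 2 - 16 * (2 ^ n) ^ 3 * n
        + 36 * 2 ^ n * 3 ^ n * n - 24 * (2 ^ n) ^ 2 * n - 128 * (2 ^ n) ^ 2 + 104 * 2 ^ n * 3 ^ n
        - 8 * 2 ^ n * n + 8 * 3 ^ n * n - 32 * 2 ^ n + 104 * 3 ^ n := by
  have hD : D1 n = _ := funext (D1_eq n)
  have hN : N1 n = _ := funext (N1_eq n)
  have h0 := habc n 0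
  have h1 := habc n 1
  have h2 := habc n (-1)
  rw [hD, hN] at h0 h1 h2
  simp only [deriv_quadratic] at h0 h1 h2
  generalize (2 : ℝ) ^ n = p at *
  generalize (3 : ℝ) ^ n = q at *
  refine ⟨?_, ?_, ?_⟩ <;> linarith

/-! ### Asymptotics of the coefficients -/

lemma tendsto_inv_two_pow : Tendsto (fun n : ℕ => ((2 : ℝ) ^ n)⁻¹) atTop (𝓝 0) := by
  simpa only [inv_pow] using
    tendsto_pow_atTop_nhds_zero_of_lt_one (r := (2 : ℝ)⁻¹) (by norm_num) (by norm_num)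

lemma tendsto_three_div_four : Tendsto (fun n : ℕ => (3 : ℝ) ^ n / (2 ^ n) ^ 2) atTop (𝓝 0) := by
  refine (tendsto_pow_atTop_nhds_zero_of_lt_one (r := (3 / 4 : ℝ)) (by norm_num)
    (by norm_num)).congr fun n => ?_
  rw [div_pow, ← pow_mul, mul_comm n 2, pow_mul]
  norm_num

lemma tendsto_nat_mul_two_div_three :
    Tendsto (fun n : ℕ => (n : ℝ) * 2 ^ n / 3 ^ n) atTop (𝓝 0) := by
  refine (tendsto_self_mul_const_pow_of_lt_one (r := (2 / 3 : ℝ)) (by norm_num)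
    (by norm_num)).congr fun n => ?_
  rw [div_pow, mul_div_assoc]

lemma tendsto_nat_div_two_pow : Tendsto (fun n : ℕ => (n : ℝ) / 2 ^ n) atTop (𝓝 0) := by
  refine (tendsto_self_mul_const_pow_of_lt_one (r := (1 / 2 : ℝ)) (by norm_num)
    (by norm_num)).congr fun n => ?_
  rw [div_pow, one_pow, mul_one_div]

lemma tendsto_inv_nat : Tendsto (fun n : ℕ => (n : ℝ)⁻¹) atTop (𝓝 0) :=
  tendsto_inv_atTop_nhds_zero_nat

/-- Evaluating a continuous function of five variables along sequences tending to `0`. -/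
lemma tendsto_at_origin {f₁ f₂ f₃ f₄ f₅ : ℕ → ℝ} (F : ℝ × ℝ × ℝ × ℝ × ℝ → ℝ)
    (hF : Continuous F) (h₁ : Tendsto f₁ atTop (𝓝 0)) (h₂ : Tendsto f₂ atTop (𝓝 0))
    (h₃ : Tendsto f₃ atTop (𝓝 0)) (h₄ : Tendsto f₄ atTop (𝓝 0)) (h₅ : Tendsto f₅ atTop (𝓝 0)) :
    Tendsto (fun n => F (f₁ n, f₂ n, f₃ n, f₄ n, f₅ n)) atTop (𝓝 (F (0, 0, 0, 0, 0))) :=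
  (hF.tendsto _).comp
    (h₁.prodMk_nhds (h₂.prodMk_nhds (h₃.prodMk_nhds (h₄.prodMk_nhds h₅))))

section Coefficients

variable {a b c : ℕ → ℝ}

-- In the next three lemmas `e = 2⁻ⁿ`, `r = 3ⁿ/4ⁿ`, `h = n·2ⁿ/3ⁿ`, `k = 1/n`, `w = n/2ⁿ`.

lemma tendsto_a
    (habc : ∀ (n : ℕ) (y : ℝ),
      deriv (N1 n) y * D1 n y - N1 n y * deriv (D1 n) y = a n * y ^ 2 + b n * y + c n) :
    Tendsto (fun n : ℕ => a n / (n * (2 ^ n) ^ 2)) atTop (𝓝 8) := by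
  have key := tendsto_at_origin
    (fun ⟨e, r, _, k, w⟩ => k * (2 - 2 * e) * (8 * e - 4 + 2 * w)
      - (-8 * e ^ 2 + 4 * e - 8 + 12 * r - 2 * w * e)) (by fun_prop)
    tendsto_inv_two_pow tendsto_three_div_four tendsto_nat_mul_two_div_three tendsto_inv_nat
    tendsto_nat_div_two_pow
  norm_num at key
  refine key.congr' ?_
  filter_upwards [eventually_ge_atTop 1] with n hn
  have hn' : (n : ℝ) ≠ 0 := by positivity
  have hp : (2 : ℝ) ^ n ≠ 0 := by positivity
  rw [(coeffs habc n).1]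
  generalize (2 : ℝ) ^ n = p at *
  generalize (3 : ℝ) ^ n = q at *
  field_simp

lemma tendsto_b
    (habc : ∀ (n : ℕ) (y : ℝ),
      deriv (N1 n) y * D1 n y - N1 n y * deriv (D1 n) y = a n * y ^ 2 + b n * y + c n) :
    Tendsto (fun n : ℕ => b n / (n * (2 ^ n) ^ 3)) atTop (𝓝 (-16)) := by
  have key := tendsto_at_origin
    (fun ⟨e, r, _, k, w⟩ =>
      2 * ((2 - 2 * e) * (10 * e ^ 2 - 4 * e + 4 - 6 * r + w * e) * k
        - (-10 * e ^ 3 + 8 * e ^ 2 + 4 * e + 8 + 8 * r * e - 18 * r - w * e ^ 2))) (by fun_prop)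
    tendsto_inv_two_pow tendsto_three_div_four tendsto_nat_mul_two_div_three tendsto_inv_nat
    tendsto_nat_div_two_pow
  norm_num at key
  refine key.congr' ?_
  filter_upwards [eventually_ge_atTop 1] with n hn
  have hn' : (n : ℝ) ≠ 0 := by positivity
  have hp : (2 : ℝ) ^ n ≠ 0 := by positivity
  rw [(coeffs habc n).2.1]
  generalize (2 : ℝ) ^ n = p at *
  generalize (3 : ℝ) ^ n = q at *
  field_simp

lemma tendsto_c
    (habc : ∀ (n : ℕ) (y : ℝ),
      deriv (N1 n) y * D1 n y - N1 n y * deriv (D1 n) y = a n * y ^ 2 + b n * y + c n) :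
    Tendsto (fun n : ℕ => c n / ((2 ^ n) ^ 2 * 3 ^ n)) atTop (𝓝 24) := by
  have key := tendsto_at_origin
    (fun ⟨e, r, h, k, w⟩ => 24 - 72 * r - 16 * h + 36 * w - 24 * h * e - 128 * h * e * k + 104 * e
      - 8 * h * e ^ 2 + 8 * w * e - 32 * h * e ^ 2 * k + 104 * e ^ 2) (by fun_prop)
    tendsto_inv_two_pow tendsto_three_div_four tendsto_nat_mul_two_div_three tendsto_inv_nat
    tendsto_nat_div_two_pow
  norm_num at key
  refine key.congr' ?_
  filter_upwards [eventually_ge_atTop 1] with n hn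
  have hn' : (n : ℝ) ≠ 0 := by positivity
  have hp : (2 : ℝ) ^ n ≠ 0 := by positivity
  have hq : (3 : ℝ) ^ n ≠ 0 := by positivity
  rw [(coeffs habc n).2.2]
  generalize (2 : ℝ) ^ n = p at *
  generalize (3 : ℝ) ^ n = q at *
  field_simp

/-! ### The root -/

/-- The discriminant divided by the square of the size `n·2^{3n}` of `b`. -/
lemma tendsto_disc
    (habc : ∀ (n : ℕ) (y : ℝ),
      deriv (N1 n) y * D1 n y - N1 n y * deriv (D1 n) y = a n * y ^ 2 + b n * y + c n) :
    Tendsto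
    (fun n : ℕ => (b n ^ 2 - 4 * a n * c n) / (n * (2 ^ n) ^ 3) ^ 2) atTop (𝓝 256) := by
  have key := ((tendsto_b habc).pow 2).sub
    ((((tendsto_a habc).mul (tendsto_c habc)).const_mul 4).mul
      (tendsto_three_div_four.mul tendsto_inv_nat))
  norm_num at key
  refine key.congr' ?_
  filter_upwards [eventually_ge_atTop 1] with n hn
  have hn' : (n : ℝ) ≠ 0 := by positivity
  have hp : (2 : ℝ) ^ n ≠ 0 := by positivity
  have hq : (3 : ℝ) ^ n ≠ 0 := by positivity
  field_simp

lemma eventually_signs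
    (habc : ∀ (n : ℕ) (y : ℝ),
      deriv (N1 n) y * D1 n y - N1 n y * deriv (D1 n) y = a n * y ^ 2 + b n * y + c n) :
    ∀ᶠ n : ℕ in atTop, 0 < a n ∧ b n < 0 ∧ 0 < b n ^ 2 - 4 * a n * c n := by
  filter_upwards [(tendsto_a habc).eventually (lt_mem_nhds (by norm_num : (0 : ℝ) < 8)),
    (tendsto_b habc).eventually (gt_mem_nhds (by norm_num : (-16 : ℝ) < 0)),
    (tendsto_disc habc).eventually (lt_mem_nhds (by norm_num : (0 : ℝ) < 256)),
    eventually_ge_atTop 1] with n ha hb hd hn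
  have hn' : (0 : ℝ) < n := by positivity
  refine ⟨(div_pos_iff_of_pos_right (by positivity)).1 ha, ?_,
    (div_pos_iff_of_pos_right (by positivity)).1 hd⟩
  by_contra! hb'
  exact absurd hb (not_lt.2 (by positivity))

lemma tendsto_root
    (habc : ∀ (n : ℕ) (y : ℝ),
      deriv (N1 n) y * D1 n y - N1 n y * deriv (D1 n) y = a n * y ^ 2 + b n * y + c n) :
    Tendsto
    (fun n : ℕ => (b n + √(b n ^ 2 - 4 * a n * c n)) / (2 * a n) * (n * 2 ^ n / 3 ^ n))
    atTop (𝓝 (-(3 / 2))) := by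
  have hs : √(256 : ℝ) = 16 := by
    rw [show (256 : ℝ) = 16 ^ 2 by norm_num]
    exact Real.sqrt_sq (by norm_num)
  have key := ((tendsto_c habc).const_mul (-2)).div
    ((Real.continuous_sqrt.tendsto _).comp (tendsto_disc habc) |>.sub (tendsto_b habc))
    (by rw [hs]; norm_num)
  rw [hs] at key
  norm_num at key
  refine key.congr' ?_
  filter_upwards [eventually_signs habc, eventually_ge_atTop 1] with n ⟨ha, hb, hd⟩ hn
  have hn' : (0 : ℝ) < n := by positivity
  have hp : (0 : ℝ) < 2 ^ n := by positivity
  have hq : (0 : ℝ) < 3 ^ n := by positivity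
  have hsq := Real.sq_sqrt hd.le
  simp only [Pi.div_apply]
  rw [Real.sqrt_div hd.le, Real.sqrt_sq (by positivity)]
  have hspos := Real.sqrt_pos.2 hd
  generalize √(b n ^ 2 - 4 * a n * c n) = S at *
  have hSb : S - b n ≠ 0 := by linarith
  rw [← sub_div]
  field_simp
  linear_combination (-1 : ℝ) * hsq

end Coefficients

/-! ### Positivity of `N` and `D` -/

/-- `N(m,y)` as a polynomial in `2^m`, `3^m`, `m` and `y`. -/
lemma Nv_eq (m : ℕ) (y t s : ℝ) (ht : t = 2 ^ m) (hs : s = 3 ^ m) :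
    Nv m y =
      (1/12) + 3 * y - m + (8/3) * s - 4 * t - 2 * y ^ 2 + 2 * m * y + 12 * s ^ 2
        + (3/2) * t * y - (107/10) * t * s + (149/48) * t ^ 2 - 2 * m * y ^ 2 - 12 * s ^ 2 * y
        + (1/2) * t * m * y + (14/3) * t * s * y + 3 * t * s ^ 2 - 4 * t ^ 2 * y
        - (1/8) * t ^ 2 * m - (217/12) * t ^ 2 * s + (79/8) * t ^ 3 + (3/2) * t * s ^ 2 * m
        + 2 * t ^ 2 * y ^ 2 - (1/16) * t ^ 2 * m ^ 2 - (7/12) * t ^ 2 * s * m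
        - 18 * t ^ 2 * s ^ 2 - t ^ 3 * y + t ^ 3 * m + (28/3) * t ^ 3 * s + (193/40) * t ^ 4
        - t ^ 3 * m * y + 8 * t ^ 4 * y + (1/4) * t ^ 4 * m - 2 * t ^ 5
        + (1/8) * t ^ 4 * m ^ 2 - 2 * t ^ 5 * m + 8 * t ^ 6 := by
  have h2 : (2 : ℝ) ^ (m : ℤ) = t := by rw [ht, zpow_natCast]
  have h3 : (3 : ℝ) ^ (m : ℤ) = s := by rw [hs, zpow_natCast]
  have h6 : (6 : ℝ) ^ (m : ℤ) = t * s := by rw [ht, hs, zpow_natCast, ← mul_pow]; norm_num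
  unfold Nv
  simp only [zpow_add₀ (two_ne_zero' ℝ), zpow_sub₀ (two_ne_zero' ℝ), zpow_add₀ (three_ne_zero' ℝ),
    zpow_sub₀ (three_ne_zero' ℝ), zpow_add₀ (by norm_num : (6 : ℝ) ≠ 0), mul_comm _ (m : ℤ),
    zpow_mul, h2, h3, h6]
  norm_cast
  push_cast
  ring

/-- `D(m,y)` as a polynomial in `2^m`, `3^m`, `m` and `y`. -/
lemma Dv_eq (m : ℕ) (y t s : ℝ) (ht : t = 2 ^ m) (hs : s = 3 ^ m) :
    Dv m y =
      -(1/12) - 3 * y + m - (8/3) * s + 4 * t - 2 * m * y - 6 * s ^ 2 - (3/2) * t * y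
        + (14/3) * t * s - (149/48) * t ^ 2 + 2 * m * y ^ 2 - (1/2) * t * m * y
        + 4 * t ^ 2 * y + (1/8) * t ^ 2 * m - t ^ 3 + (1/16) * t ^ 2 * m ^ 2 - t ^ 3 * m
        + 4 * t ^ 4 := by
  have h2 : (2 : ℝ) ^ (m : ℤ) = t := by rw [ht, zpow_natCast]
  have h3 : (3 : ℝ) ^ (m : ℤ) = s := by rw [hs, zpow_natCast]
  have h4 : (4 : ℝ) ^ (m : ℤ) = t ^ 2 := by
    rw [ht, zpow_natCast, ← pow_mul, mul_comm, pow_mul]; norm_num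
  unfold Dv
  simp only [zpow_add₀ (two_ne_zero' ℝ), zpow_sub₀ (two_ne_zero' ℝ), zpow_add₀ (three_ne_zero' ℝ),
    zpow_sub₀ (three_ne_zero' ℝ), zpow_sub₀ (by norm_num : (4 : ℝ) ≠ 0), mul_comm _ (m : ℤ),
    zpow_mul, h2, h3, h4]
  norm_cast
  push_cast
  ring

-- In the next two lemmas `e = 2⁻ᵐ`, `r = 3ᵐ/4ᵐ`, `w = m/2ᵐ`, `z = y/4ᵐ`, `x = m·y/4ᵐ`.

lemma tendsto_Nv {y : ℕ → ℝ} (hz : Tendsto (fun m : ℕ => y m / (2 ^ m) ^ 2) atTop (𝓝 0)) :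
    Tendsto (fun m : ℕ => Nv m (y m) / (2 ^ m) ^ 6) atTop (𝓝 8) := by
  have key := tendsto_at_origin
    (fun ⟨e, r, w, z, _⟩ =>
      8 + 8 * z - 2 * w - 2 * e + 2 * z ^ 2 - w * z + (1/8) * w ^ 2 - 18 * r ^ 2 - e * z
        + (1/4) * e * w + (28/3) * e * r + (193/40) * e ^ 2 - 12 * r ^ 2 * z
        + (3/2) * r ^ 2 * w + (14/3) * e * r * z - (7/12) * e * r * w + 3 * e * r ^ 2
        - 4 * e ^ 2 * z + e ^ 2 * w - (217/12) * e ^ 2 * r + (79/8) * e ^ 3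
        - 2 * e * w * z ^ 2 - 2 * e ^ 2 * z ^ 2 + (1/2) * e ^ 2 * w * z
        - (1/16) * e ^ 2 * w ^ 2 + 12 * e ^ 2 * r ^ 2 + (3/2) * e ^ 3 * z - (1/8) * e ^ 3 * w
        - (107/10) * e ^ 3 * r + (149/48) * e ^ 4 + 2 * e ^ 3 * w * z + 3 * e ^ 4 * z
        + (8/3) * e ^ 4 * r - 4 * e ^ 5 - e ^ 5 * w + (1/12) * e ^ 6) (by fun_prop)
    tendsto_inv_two_pow tendsto_three_div_four tendsto_nat_div_two_pow hz hz
  norm_num at key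
  refine key.congr fun m => ?_
  have hp : (2 : ℝ) ^ m ≠ 0 := by positivity
  rw [Nv_eq m (y m) _ _ rfl rfl]
  generalize (2 : ℝ) ^ m = t at *
  generalize (3 : ℝ) ^ m = s at *
  field_simp
  ring

lemma tendsto_Dv {y : ℕ → ℝ} (hz : Tendsto (fun m : ℕ => y m / (2 ^ m) ^ 2) atTop (𝓝 0))
    (hx : Tendsto (fun m : ℕ => m * y m / (2 ^ m) ^ 2) atTop (𝓝 0)) :
    Tendsto (fun m : ℕ => Dv m (y m) / (2 ^ m) ^ 4) atTop (𝓝 4) := by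
  have key := tendsto_at_origin
    (fun ⟨e, r, w, z, x⟩ =>
      4 + 4 * z - w - e + 2 * x * z - (1/2) * w * z + (1/16) * w ^ 2 - 6 * r ^ 2
        - (3/2) * e * z + (1/8) * e * w + (14/3) * e * r - (149/48) * e ^ 2 - 2 * e * w * z
        - 3 * e ^ 2 * z - (8/3) * e ^ 2 * r + 4 * e ^ 3 + e ^ 3 * w - (1/12) * e ^ 4) (by fun_prop)
    tendsto_inv_two_pow tendsto_three_div_four tendsto_nat_div_two_pow hz hx
  norm_num at key
  refine key.congr fun m => ?_
  have hp : (2 : ℝ) ^ m ≠ 0 := by positivity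
  rw [Dv_eq m (y m) _ _ rfl rfl]
  generalize (2 : ℝ) ^ m = t at *
  generalize (3 : ℝ) ^ m = s at *
  field_simp
  ring

/-- with `a(n), b(n), c(n)` defined by the identity
`(∂N₁/∂y)·D₁ − N₁·(∂D₁/∂y) = a(n)·y² + b(n)·y + c(n)` and
`y_m = (b(2m) + √(b(2m)² − 4a(2m)c(2m)))/(2a(2m))`, there exists `m₀` such that for all
`m ≥ m₀`: `a(2m) ≠ 0`, `b(2m)² − 4a(2m)c(2m) ≥ 0`, `N(m, y_m) > 0` and `D(m, y_m) > 0`;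
moreover `y_m ~ −3^{2m+1}/(2^{2m+1}·2m)` as `m → ∞`. -/
theorem stmt18 (a b c : ℕ → ℝ)
    (habc : ∀ (n : ℕ) (y : ℝ),
      deriv (N1 n) y * D1 n y - N1 n y * deriv (D1 n) y
        = a n * y ^ 2 + b n * y + c n)
    (yseq : ℕ → ℝ)
    (hy : ∀ m : ℕ, yseq m
      = (b (2 * m) + Real.sqrt ((b (2 * m)) ^ 2 - 4 * a (2 * m) * c (2 * m)))
          / (2 * a (2 * m))) :
    (∃ m₀ : ℕ, ∀ m ≥ m₀,
        a (2 * m) ≠ 0 ∧ 0 ≤ (b (2 * m)) ^ 2 - 4 * a (2 * m) * c (2 * m)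
          ∧ 0 < Nv m (yseq m) ∧ 0 < Dv m (yseq m)) ∧
    Filter.Tendsto
      (fun m : ℕ => yseq m / (-(3:ℝ) ^ (2 * m + 1) / ((2:ℝ) ^ (2 * m + 1) * (2 * (m:ℝ)))))
      Filter.atTop (nhds 1) := by
  have h2m : Tendsto (fun m : ℕ => 2 * m) atTop atTop :=
    tendsto_atTop_mono (fun m => Nat.le_mul_of_pos_left m two_pos) tendsto_id
  have hroot : Tendsto (fun m : ℕ => yseq m * (((2 * m : ℕ) : ℝ) * 2 ^ (2 * m) / 3 ^ (2 * m)))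
      atTop (𝓝 (-(3 / 2))) :=
    ((tendsto_root habc).comp h2m).congr fun m => by
      simp only [Function.comp, hy]
  -- `m·y_m/4^m` is half of the bounded quantity in `hroot` times `3^{2m}/4^{2m}`.
  have hx : Tendsto (fun m : ℕ => m * yseq m / (2 ^ m) ^ 2) atTop (𝓝 0) := by
    have key := (hroot.mul (tendsto_three_div_four.comp h2m)).mul_const (1 / 2)
    norm_num at key
    refine key.congr fun m => ?_
    have hp : (2 : ℝ) ^ m ≠ 0 := by positivity
    have hq : (3 : ℝ) ^ m ≠ 0 := by positivity
    simp only [mul_comm 2 m, pow_mul]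
    field_simp
  have hz : Tendsto (fun m : ℕ => yseq m / (2 ^ m) ^ 2) atTop (𝓝 0) := by
    have key := hx.mul tendsto_inv_nat
    norm_num at key
    refine key.congr' ?_
    filter_upwards [eventually_ge_atTop 1] with m hm
    have hm' : (m : ℝ) ≠ 0 := by positivity
    field_simp
  refine ⟨eventually_atTop.1 ?_, ?_⟩
  · filter_upwards [h2m.eventually (eventually_signs habc),
      (tendsto_Nv hz).eventually (lt_mem_nhds (by norm_num : (0 : ℝ) < 8)),
      (tendsto_Dv hz hx).eventually (lt_mem_nhds (by norm_num : (0 : ℝ) < 4))]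
      with m ⟨ha, _, hd⟩ hN hD
    exact ⟨ha.ne', hd.le, (div_pos_iff_of_pos_right (by positivity)).1 hN,
      (div_pos_iff_of_pos_right (by positivity)).1 hD⟩
  · have key := hroot.mul_const (-(2 / 3))
    norm_num at key
    refine key.congr' ?_
    filter_upwards [eventually_ge_atTop 1] with m hm
    have hm' : (m : ℝ) ≠ 0 := by positivity
    have hp : (2 : ℝ) ^ m ≠ 0 := by positivity
    have hq : (3 : ℝ) ^ m ≠ 0 := by positivity
    simp only [pow_succ _ (2 * m)]
    field_simp
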